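/- Let S be a computable binary tree and Φ a use-monotone Turing functional. Suppose that there is no infinite computable binary tree T ⊆ S with m([T]) > 0 such that for some x, every Y ∈ [T] satisfies that the cardinality of dom Φ(Y) is < x. Then m({Y ∈ [S] : dom Φ(Y) is finite}) = 0. -/

import Mathlib

open MeasureTheory

/-- Finite binary strings. -/
abbrev BinStr := List Bool

/-- `σ` is a (finite) initial segment of `X ∈ 2^ℕ`. -/
def IsInitSeg (σ : BinStr) (X : ℕ → Bool) : Prop :=
  ∀ i, i < σ.length → σ.getD i false = X i

/-- `A ⊆* B` : all but finitely many elements of `A` are in `B`. -/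
def SubsetStar (A B : Set ℕ) : Prop := (A \ B).Finite

/-- `C` is cohesive for the sequence `R`. -/
def Cohesive (R : ℕ → Set ℕ) (C : Set ℕ) : Prop :=
  C.Infinite ∧ ∀ n, SubsetStar C (R n) ∨ SubsetStar C (R n)ᶜ

/-- A set of naturals is computable if its characteristic function is computable. -/
def ComputableSet (A : Set ℕ) : Prop :=
  ∃ f : ℕ → Bool, Computable f ∧ ∀ n, n ∈ A ↔ f n = true

/-- A sequence of sets is computable if `{(n,x) : x ∈ R n}` is computable. -/
def ComputableSeq (R : ℕ → Set ℕ) : Prop :=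
  ∃ f : ℕ → ℕ → Bool, Computable₂ f ∧ ∀ n x, x ∈ R n ↔ f n x = true

/-- A use-monotone Turing functional: a partial computable map from
(strings × ℕ) to ℕ whose domain is monotone along extension of strings. -/
structure TuringFunctional where
  Φ : BinStr × ℕ →. ℕ
  partrec : Partrec Φ
  mono : ∀ ⦃σ τ : BinStr⦄, σ <+: τ → ∀ x, (Φ (σ, x)).Dom → (Φ (τ, x)).Dom

/-- `dom Φ(σ)` for a finite string `σ`. -/
def TuringFunctional.domStr (F : TuringFunctional) (σ : BinStr) : Set ℕ :=
  {x | (F.Φ (σ, x)).Dom}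

/-- `dom Φ(X)` for `X ∈ 2^ℕ`: the union of `dom Φ(σ)` over initial segments `σ` of `X`. -/
def TuringFunctional.domF (F : TuringFunctional) (X : ℕ → Bool) : Set ℕ :=
  {x | ∃ σ, IsInitSeg σ X ∧ (F.Φ (σ, x)).Dom}

/-- `C ≤_T X` via a monotone partial computable functional with Boolean values. -/
def ReducibleToFun (C : Set ℕ) (X : ℕ → Bool) : Prop :=
  ∃ Ψ : BinStr × ℕ →. Bool,
    Partrec Ψ ∧
    (∀ ⦃σ τ : BinStr⦄, σ <+: τ → ∀ x b, b ∈ Ψ (σ, x) → b ∈ Ψ (τ, x)) ∧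
    (∀ x, ∃ σ, IsInitSeg σ X ∧ (Ψ (σ, x)).Dom) ∧
    (∀ σ x b, IsInitSeg σ X → b ∈ Ψ (σ, x) → (b = true ↔ x ∈ C))

/-- `S` is a `Σ⁰₃` set of binary strings. -/
def Sigma3 (S : Set BinStr) : Prop :=
  ∃ P : BinStr → ℕ → ℕ → ℕ → Bool,
    (Computable fun q : BinStr × ℕ × ℕ × ℕ => P q.1 q.2.1 q.2.2.1 q.2.2.2) ∧
    ∀ σ, σ ∈ S ↔ ∃ a, ∀ b, ∃ c, P σ a b c = true

/-- `G ∈ 2^ℕ` is `3`-generic: it meets or strongly avoids every `Σ⁰₃` set of strings. -/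
def ThreeGeneric (G : ℕ → Bool) : Prop :=
  ∀ S : Set BinStr, Sigma3 S →
    (∃ σ, IsInitSeg σ G ∧ σ ∈ S) ∨ (∃ σ, IsInitSeg σ G ∧ ∀ τ, σ <+: τ → τ ∉ S)

/-- Binary trees: sets of strings closed under initial segments. -/
def IsTree (T : Set BinStr) : Prop := ∀ σ ∈ T, ∀ τ, τ <+: σ → τ ∈ T

/-- `[T]`, the set of infinite paths through `T`. -/
def paths (T : Set BinStr) : Set (ℕ → Bool) := {X | ∀ σ, IsInitSeg σ X → σ ∈ T}

/-- A computable set of binary strings. -/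
def ComputableStrSet (T : Set BinStr) : Prop :=
  ∃ f : BinStr → Bool, Computable f ∧ ∀ σ, σ ∈ T ↔ f σ = true

/-- The fair-coin (uniform) product measure on Cantor space `ℕ → Bool`, realized as
the pushforward of Lebesgue measure on `[0,1)` under the binary-digit map. -/
noncomputable def fairCoin : Measure (ℕ → Bool) :=
  Measure.map (fun x : ℝ => fun n : ℕ => decide (⌊x * 2 ^ (n + 1)⌋ % 2 = 1))
    (volume.restrict (Set.Ico (0 : ℝ) 1))

/-- The basic clopen set `[σ]` of all `X ∈ 2^ℕ` extending `σ`. -/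
def cyl (σ : BinStr) : Set (ℕ → Bool) := {X | IsInitSeg σ X}

/-- A computably enumerable set of pairs `(n, σ)`. -/
def CEStrSet (W : Set (ℕ × BinStr)) : Prop :=
  ∃ f : ℕ × BinStr →. Unit, Partrec f ∧ ∀ p, p ∈ W ↔ (f p).Dom

/-- `X` is Martin-Löf random: it passes every Martin-Löf test. -/
def MLRandom (X : ℕ → Bool) : Prop :=
  ∀ W : Set (ℕ × BinStr), CEStrSet W →
    (∀ n : ℕ, fairCoin (⋃ σ ∈ {σ | (n, σ) ∈ W}, cyl σ) ≤ 1 / 2 ^ n) →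
    X ∉ ⋂ n : ℕ, ⋃ σ ∈ {σ | (n, σ) ∈ W}, cyl σ

/-- A uniformly computable enumeration of binary trees containing every computable
binary tree. -/
def TreeEnum (T : ℕ → Set BinStr) : Prop :=
  (∃ f : ℕ → BinStr → Bool, Computable₂ f ∧ ∀ e σ, σ ∈ T e ↔ f e σ = true) ∧
  (∀ e, IsTree (T e)) ∧
  (∀ S, IsTree S → ComputableStrSet S → ∃ e, T e = S)

/-- The set `D_{e,0}` of strings forcing `dom Φ(G)` to be bounded. -/
def D0 (F : TuringFunctional) : Set BinStr :=
  {τ | ∃ x : ℕ, ∀ ρ, τ <+: ρ → (F.domStr ρ).encard < (x : ℕ∞)}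

/-- The set `D_{e,1,n}` of strings forcing `dom Φ(G)` to be split by `R n`. -/
def D1 (R : ℕ → Set ℕ) (F : TuringFunctional) (n : ℕ) : Set BinStr :=
  {τ | ∀ ρ, τ <+: ρ → ∀ x : ℕ, ∃ ζ, ρ <+: ζ ∧ ∃ u v, x < u ∧ x < v ∧
    u ∈ F.domStr ζ ∧ v ∈ F.domStr ζ ∧ (u ∈ R n ↔ v ∉ R n)}

/-!
Having at most `k` elements in `dom Φ(Y)` is a `Π⁰₁` condition on `Y`: a violation is seen after
finitely many steps from a finite initial segment of `Y`, so the `Y` satisfying it are the paths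
through a computable tree. Intersecting with `S` writes `{Y ∈ [S] : dom Φ(Y) is finite}` as a
countable union of sets `[T k]`, with `T k ⊆ S` a computable tree whose paths have uniformly
bounded domain. If some `[T k]` had positive measure it would be nonempty, so `T k` would be
infinite, contradicting the hypothesis.
-/

theorem encard_iUnion_of_directed {ι α : Type*} {s : ι → Set α} (hs : Directed (· ⊆ ·) s) :
    (⋃ i, s i).encard = ⨆ i, (s i).encard := by
  refine le_antisymm ?_ (iSup_le fun i => Set.encard_le_encard (Set.subset_iUnion s i))
  cases isEmpty_or_nonempty ι
  · simp
  refine ENat.forall_natCast_le_iff_le.1 fun n hn => ?_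
  obtain ⟨B, hB, hBn⟩ := Set.exists_subset_encard_eq hn
  lift B to Finset α using Set.finite_of_encard_eq_coe hBn
  obtain ⟨i, hi⟩ : ∃ i, (B : Set α) ⊆ s i := hs.exists_mem_subset_of_finset_subset_biUnion hB
  calc (n : ℕ∞) = (B : Set α).encard := hBn.symm
    _ ≤ (s i).encard := Set.encard_le_encard hi
    _ ≤ ⨆ i, (s i).encard := le_iSup (fun i => (s i).encard) i

/-- The initial segment `X ↾ n` of length `n`. -/
def initSeg (X : ℕ → Bool) (n : ℕ) : BinStr := (List.range n).map X

@[simp]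
theorem length_initSeg (X : ℕ → Bool) (n : ℕ) : (initSeg X n).length = n := by
  simp [initSeg]

theorem isInitSeg_iff_eq_initSeg {σ : BinStr} {X : ℕ → Bool} :
    IsInitSeg σ X ↔ σ = initSeg X σ.length := by
  constructor
  · intro h
    refine List.ext_getElem (by simp) fun i hi _ => ?_
    simp [initSeg, ← h i hi, hi]
  · intro h i hi
    rw [h]
    simp [initSeg, hi]

theorem isInitSeg_initSeg (X : ℕ → Bool) (n : ℕ) : IsInitSeg (initSeg X n) X :=
  isInitSeg_iff_eq_initSeg.2 (by simp)

theorem initSeg_prefix_initSeg (X : ℕ → Bool) {m n : ℕ} (h : m ≤ n) :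
    initSeg X m <+: initSeg X n := by
  obtain ⟨d, rfl⟩ := Nat.exists_eq_add_of_le h
  simp [initSeg, List.range_add]

theorem IsInitSeg.of_isPrefix {σ τ : BinStr} {X : ℕ → Bool} (hσ : IsInitSeg σ X) (h : τ <+: σ) :
    IsInitSeg τ X := by
  intro i hi
  obtain ⟨ρ, rfl⟩ := h
  rw [← hσ i (by simp; omega), List.getD_append _ _ _ _ hi]

theorem mem_paths_iff_forall_initSeg_mem {T : Set BinStr} {X : ℕ → Bool} :
    X ∈ paths T ↔ ∀ n, initSeg X n ∈ T :=
  ⟨fun hX n => hX _ (isInitSeg_initSeg X n),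
    fun hX σ hσ => isInitSeg_iff_eq_initSeg.1 hσ ▸ hX σ.length⟩

theorem paths_inter (S T : Set BinStr) : paths (S ∩ T) = paths S ∩ paths T := by
  ext X
  simp only [mem_paths_iff_forall_initSeg_mem, Set.mem_inter_iff, forall_and]

theorem infinite_of_nonempty_paths {T : Set BinStr} (h : (paths T).Nonempty) : T.Infinite := by
  obtain ⟨X, hX⟩ := h
  have initSeg_injective : Function.Injective (initSeg X) := fun m n hmn => by
    simpa using congrArg List.length hmn
  exact Set.infinite_of_injective_forall_mem initSeg_injective
    (mem_paths_iff_forall_initSeg_mem.1 hX)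

theorem IsTree.inter {S T : Set BinStr} (hS : IsTree S) (hT : IsTree T) : IsTree (S ∩ T) :=
  fun σ hσ τ hτ => ⟨hS σ hσ.1 τ hτ, hT σ hσ.2 τ hτ⟩

theorem ComputableStrSet.inter {S T : Set BinStr} (hS : ComputableStrSet S)
    (hT : ComputableStrSet T) : ComputableStrSet (S ∩ T) := by
  obtain ⟨f, hf, hfS⟩ := hS
  obtain ⟨g, hg, hgT⟩ := hT
  exact ⟨fun σ => f σ && g σ, Primrec.and.to_comp.comp hf hg, fun σ => by simp [hfS, hgT]⟩

/-- The set `W^Y` enumerated from the oracle `Y`, where a pair `(σ, x) ∈ W` puts in `x` once `σ` is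
found to be an initial segment of `Y`. When `W` is the domain of a Turing functional `Φ`, this is
`dom Φ(Y)`. -/
def oracleEnum (W : BinStr × ℕ → Prop) (Y : ℕ → Bool) : Set ℕ :=
  {x | ∃ σ, IsInitSeg σ Y ∧ W (σ, x)}

/-- `e k a` says that `a` has been enumerated into `p` by stage `k`, in a primitive recursive
enumeration of the r.e. predicate `p`. -/
structure IsStageEnum {α : Type*} [Primcodable α] (p : α → Prop) (e : ℕ → α → Bool) : Prop where
  primrec : Primrec₂ e
  mono : ∀ {k l a}, k ≤ l → e k a → e l a
  iff_exists : ∀ {a}, p a ↔ ∃ k, e k a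

theorem exists_isStageEnum_of_rePred {α : Type*} [Primcodable α] {p : α → Prop} (hp : REPred p) :
    ∃ e, IsStageEnum p e := by
  obtain ⟨c, hc⟩ := Nat.Partrec.Code.exists_code.1 hp
  have dom_eval_iff (a : α) : p a ↔ (c.eval (Encodable.encode a)).Dom := by
    simp [hc, Part.dom_iff_mem]
  refine ⟨fun k a => (c.evaln k (Encodable.encode a)).isSome, ?_, ?_, ?_⟩
  · exact Primrec.option_isSome.comp <| Nat.Partrec.Code.primrec_evaln.comp <|
      (Primrec.fst.pair (Primrec.const c)).pair (Primrec.encode.comp Primrec.snd)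
  · intro k l a hkl
    simp only [Option.isSome_iff_exists]
    exact fun ⟨y, hy⟩ => ⟨y, Nat.Partrec.Code.evaln_mono hkl hy⟩
  · intro a
    simp only [dom_eval_iff, Part.dom_iff_mem, Nat.Partrec.Code.evaln_complete,
      Option.isSome_iff_exists, Option.mem_def]
    exact exists_comm

/-- The finite part of `W^Y` seen from an initial segment `σ` of `Y`: the `x < |σ|` enumerated
within `|σ|` stages of `e` by a pair `(τ, x)` with `τ` an initial segment of `σ`. -/
def stageSet (e : ℕ → BinStr × ℕ → Bool) (σ : BinStr) : Finset ℕ :=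
  {x ∈ Finset.range σ.length | ∃ τ ∈ σ.inits, e σ.length (τ, x)}

theorem mem_stageSet {e : ℕ → BinStr × ℕ → Bool} {σ : BinStr} {x : ℕ} :
    x ∈ stageSet e σ ↔ x < σ.length ∧ ∃ τ, τ <+: σ ∧ e σ.length (τ, x) := by
  simp [stageSet]

theorem primrec_inits {α : Type*} [Primcodable α] :
    Primrec (List.inits : List α → List (List α)) := by
  refine (Primrec.list_map (f := fun l : List α => List.range (l.length + 1))
    (Primrec.list_range.comp (Primrec.succ.comp Primrec.list_length))
    (Primrec.list_take.comp Primrec.snd Primrec.fst).to₂).of_eq fun l => ?_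
  exact List.ext_getElem (by simp) (by simp)

theorem primrec_card_stageSet {e : ℕ → BinStr × ℕ → Bool} (he : Primrec₂ e) :
    Primrec fun σ => (stageSet e σ).card := by
  have seen_within_length :
      PrimrecRel fun (τ : BinStr) (p : ℕ × BinStr) => e p.2.length (τ, p.1) = true :=
    Primrec.eq.comp (he.comp (Primrec.list_length.comp (Primrec.snd.comp Primrec.snd))
      (Primrec.fst.pair (Primrec.fst.comp Primrec.snd))) (Primrec.const true)
  have enumerated : PrimrecRel fun (x : ℕ) (σ : BinStr) => ∃ τ ∈ σ.inits, e σ.length (τ, x) :=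
    seen_within_length.exists_mem_list.comp (primrec_inits.comp Primrec.snd) Primrec.id
  refine (Primrec.list_length.comp (enumerated.listFilter.comp
    (Primrec.list_range.comp Primrec.list_length) Primrec.id)).of_eq fun σ => ?_
  rw [← List.toFinset_card_of_nodup (List.nodup_range.filter _)]
  congr 1
  ext x
  simp [mem_stageSet]

/-- The tree of strings on which at most `k` elements have been seen; its paths are the `Y` for
which `W^Y` has at most `k` elements. -/
def cardLeTree (e : ℕ → BinStr × ℕ → Bool) (k : ℕ) : Set BinStr :=
  {σ | (stageSet e σ).card ≤ k}

theorem computableStrSet_cardLeTree {e : ℕ → BinStr × ℕ → Bool} (he : Primrec₂ e) (k : ℕ) :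
    ComputableStrSet (cardLeTree e k) :=
  ⟨fun σ => decide ((stageSet e σ).card ≤ k),
    (Primrec.nat_le.comp (primrec_card_stageSet he) (Primrec.const k)).decide.to_comp,
    fun σ => by simp [cardLeTree]⟩

namespace IsStageEnum

variable {W : BinStr × ℕ → Prop} {e : ℕ → BinStr × ℕ → Bool}

theorem stageSet_mono (he : IsStageEnum W e) {τ σ : BinStr} (h : τ <+: σ) :
    stageSet e τ ⊆ stageSet e σ := by
  intro x hx
  obtain ⟨hxτ, ρ, hρ, hρx⟩ := mem_stageSet.1 hx
  exact mem_stageSet.2 ⟨hxτ.trans_le h.length_le, ρ, hρ.trans h, he.mono h.length_le hρx⟩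

theorem isTree_cardLeTree (he : IsStageEnum W e) (k : ℕ) : IsTree (cardLeTree e k) :=
  fun _ hσ _ hτ => (Finset.card_le_card (he.stageSet_mono hτ)).trans hσ

theorem iUnion_stageSet_initSeg (he : IsStageEnum W e) (Y : ℕ → Bool) :
    ⋃ n, (stageSet e (initSeg Y n) : Set ℕ) = oracleEnum W Y := by
  ext x
  simp only [Set.mem_iUnion, Finset.mem_coe, mem_stageSet, length_initSeg]
  constructor
  · rintro ⟨n, -, τ, hτ, hτx⟩
    exact ⟨τ, (isInitSeg_initSeg Y n).of_isPrefix hτ, he.iff_exists.2 ⟨n, hτx⟩⟩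
  · rintro ⟨σ, hσ, hσx⟩
    obtain ⟨k, hk⟩ := he.iff_exists.1 hσx
    refine ⟨max (x + 1) (max k σ.length), by omega, σ, ?_, he.mono (by omega) hk⟩
    rw [isInitSeg_iff_eq_initSeg.1 hσ, length_initSeg]
    exact initSeg_prefix_initSeg Y (by omega)

theorem paths_cardLeTree (he : IsStageEnum W e) (k : ℕ) :
    paths (cardLeTree e k) = {Y | (oracleEnum W Y).encard ≤ k} := by
  ext Y
  have stageSet_initSeg_mono : Monotone fun n => (stageSet e (initSeg Y n) : Set ℕ) :=
    fun m n hmn => Finset.coe_subset.2 (he.stageSet_mono (initSeg_prefix_initSeg Y hmn))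
  rw [Set.mem_ofPred_eq, ← he.iUnion_stageSet_initSeg,
    encard_iUnion_of_directed stageSet_initSeg_mono.directed_le]
  simp [mem_paths_iff_forall_initSeg_mem, cardLeTree]

end IsStageEnum

theorem exists_computable_tree_paths_eq_encard_le {W : BinStr × ℕ → Prop} (hW : REPred W) (k : ℕ) :
    ∃ T, IsTree T ∧ ComputableStrSet T ∧ paths T = {Y | (oracleEnum W Y).encard ≤ k} := by
  obtain ⟨e, he⟩ := exists_isStageEnum_of_rePred hW
  exact ⟨cardLeTree e k, he.isTree_cardLeTree k, computableStrSet_cardLeTree he.primrec k,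
    he.paths_cardLeTree k⟩

theorem measure_finite_domF_zero_general (μ : Measure (ℕ → Bool))
    {S : Set BinStr} (hStree : IsTree S) (hScomp : ComputableStrSet S)
    {W : BinStr × ℕ → Prop} (hW : REPred W)
    (h : ¬ ∃ (T : Set BinStr) (x : ℕ), IsTree T ∧ ComputableStrSet T ∧
        T.Infinite ∧ T ⊆ S ∧ 0 < μ (paths T) ∧
        ∀ Y ∈ paths T, (oracleEnum W Y).encard < (x : ℕ∞)) :
    μ {Y | Y ∈ paths S ∧ (oracleEnum W Y).Finite} = 0 := by
  choose T hTtree hTcomp hTpaths using exists_computable_tree_paths_eq_encard_le hW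
  have subset_iUnion_paths :
      {Y | Y ∈ paths S ∧ (oracleEnum W Y).Finite} ⊆ ⋃ k, paths (S ∩ T k) := by
    rintro Y ⟨hYS, hYfin⟩
    rw [Set.mem_iUnion]
    refine ⟨(oracleEnum W Y).ncard, ?_⟩
    rw [paths_inter, hTpaths]
    exact ⟨hYS, hYfin.cast_ncard_eq.ge⟩
  refine measure_mono_null subset_iUnion_paths (measure_iUnion_null fun k => ?_)
  by_contra hne
  refine h ⟨S ∩ T k, k + 1, hStree.inter (hTtree k), hScomp.inter (hTcomp k),
    infinite_of_nonempty_paths (nonempty_of_measure_ne_zero hne), Set.inter_subset_left,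
    pos_iff_ne_zero.2 hne, fun Y hY => ?_⟩
  rw [paths_inter, hTpaths] at hY
  exact hY.2.trans_lt (by exact_mod_cast k.lt_succ_self)

/-- If no infinite computable subtree `T ⊆ S` of positive measure bounds `dom Φ(Y)`
for all `Y ∈ [T]`, then almost every `Y ∈ [S]` has `dom Φ(Y)` infinite. -/
theorem measure_finite_domF_zero
    (S : Set BinStr) (hStree : IsTree S) (hScomp : ComputableStrSet S)
    (F : TuringFunctional)
    (h : ¬ ∃ (T : Set BinStr) (x : ℕ), IsTree T ∧ ComputableStrSet T ∧
        T.Infinite ∧ T ⊆ S ∧ 0 < fairCoin (paths T) ∧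
        ∀ Y ∈ paths T, (F.domF Y).encard < (x : ℕ∞)) :
    fairCoin {Y | Y ∈ paths S ∧ (F.domF Y).Finite} = 0 :=
  measure_finite_domF_zero_general fairCoin hStree hScomp F.partrec.dom_re h
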